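/- There exists a constant C > 0 such that for every m ≥ 1, N = 2^m, every integer k with 1 ≤ k ≤ m, and every function u that is four times continuously differentiable on a neighbourhood of [0,1]² and vanishes on the boundary of [0,1]², one has |||I^{(k)}_{N,N}u − I_{N,N}u||| ≤ C · 4^{k+1} · N^{−3} · ‖∂⁴u/∂x²∂y²‖_{0,Ω}. -/

import Mathlib

open MeasureTheory Finset

noncomputable section

/-- The hat function `ψ_i^N` on the uniform mesh of `[0,1]` with `N` intervals. -/
def hat (N i : ℕ) (x : ℝ) : ℝ :=
  if ((i : ℝ) - 1) / N ≤ x ∧ x ≤ (i : ℝ) / N then N * (x - ((i : ℝ) - 1) / N)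
  else if (i : ℝ) / N ≤ x ∧ x ≤ ((i : ℝ) + 1) / N then N * (((i : ℝ) + 1) / N - x)
  else 0

/-- The nodal piecewise bilinear interpolant `I_{Nx,Ny} u`. -/
def interp (Nx Ny : ℕ) (u : ℝ × ℝ → ℝ) : ℝ × ℝ → ℝ := fun p =>
  ∑ i ∈ range (Nx + 1), ∑ j ∈ range (Ny + 1),
    u ((i : ℝ) / Nx, (j : ℝ) / Ny) * hat Nx i p.1 * hat Ny j p.2

/-- The one-directional interpolant `I_{Nx,0} u` (interpolation in the `x`-direction only). -/
def interpX (Nx : ℕ) (u : ℝ × ℝ → ℝ) : ℝ × ℝ → ℝ := fun p =>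
  ∑ i ∈ range (Nx + 1), u ((i : ℝ) / Nx, p.2) * hat Nx i p.1

/-- The one-directional interpolant `I_{0,Ny} u` (interpolation in the `y`-direction only). -/
def interpY (Ny : ℕ) (u : ℝ × ℝ → ℝ) : ℝ × ℝ → ℝ := fun p =>
  ∑ j ∈ range (Ny + 1), u (p.1, (j : ℝ) / Ny) * hat Ny j p.2

/-- The two-scale interpolant `Î_{N,N} u = I_{N,σ}u + I_{σ,N}u − I_{σ,σ}u`. -/
def twoScale (N σ : ℕ) (u : ℝ × ℝ → ℝ) : ℝ × ℝ → ℝ := fun p =>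
  interp N σ u p + interp σ N u p - interp σ σ u p

/-- The multiscale interpolant
`I^{(k)}_{N,N} u = Σ_{i=0}^{k} I_{N/2^i, N/2^{k−i}}u − Σ_{i=1}^{k} I_{N/2^i, N/2^{k+1−i}}u`. -/
def msInterp (N k : ℕ) (u : ℝ × ℝ → ℝ) : ℝ × ℝ → ℝ := fun p =>
  ∑ i ∈ range (k + 1), interp (N / 2 ^ i) (N / 2 ^ (k - i)) u p
    - ∑ i ∈ Finset.Icc 1 k, interp (N / 2 ^ i) (N / 2 ^ (k + 1 - i)) u p

/-- The closed square `[0,1]²`. -/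
def unitSquare : Set (ℝ × ℝ) := Set.Icc (0 : ℝ) 1 ×ˢ Set.Icc (0 : ℝ) 1

/-- The open square `Ω = (0,1)²`. -/
def Omega2 : Set (ℝ × ℝ) := Set.Ioo (0 : ℝ) 1 ×ˢ Set.Ioo (0 : ℝ) 1

/-- Partial derivative in `x` (defined a.e. for Lipschitz functions; junk value `0` elsewhere). -/
def pderivX (v : ℝ × ℝ → ℝ) : ℝ × ℝ → ℝ := fun p => deriv (fun x => v (x, p.2)) p.1

/-- Partial derivative in `y` (defined a.e. for Lipschitz functions; junk value `0` elsewhere). -/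
def pderivY (v : ℝ × ℝ → ℝ) : ℝ × ℝ → ℝ := fun p => deriv (fun y => v (p.1, y)) p.2

/-- The `L²(Ω)` norm `‖v‖_{0,Ω}`. -/
def L2norm (v : ℝ × ℝ → ℝ) : ℝ := Real.sqrt (∫ p in Omega2, (v p) ^ 2)

/-- The energy norm `|||v||| = (∫_Ω |∇v|² + ∫_Ω v²)^{1/2}`, gradients taken a.e. -/
def energyNorm (v : ℝ × ℝ → ℝ) : ℝ :=
  Real.sqrt (∫ p in Omega2, ((pderivX v p) ^ 2 + (pderivY v p) ^ 2 + (v p) ^ 2))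

/-- `u` is four times continuously differentiable on a neighbourhood of `[0,1]²`. -/
def C4Near (u : ℝ × ℝ → ℝ) : Prop :=
  ∃ U : Set (ℝ × ℝ), IsOpen U ∧ unitSquare ⊆ U ∧ ContDiffOn ℝ 4 u U

/-- `u` vanishes on the boundary of `[0,1]²`. -/
def VanishOnBoundary (u : ℝ × ℝ → ℝ) : Prop :=
  ∀ p ∈ unitSquare, (p.1 = 0 ∨ p.1 = 1 ∨ p.2 = 0 ∨ p.2 = 1) → u p = 0

/-- The seminorm `|u|₂ = ‖u_xx‖_{0,Ω} + ‖u_xy‖_{0,Ω} + ‖u_yy‖_{0,Ω}`. -/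
def semi2 (u : ℝ × ℝ → ℝ) : ℝ :=
  L2norm (pderivX (pderivX u)) + L2norm (pderivX (pderivY u)) + L2norm (pderivY (pderivY u))

/-- The mixed fourth derivative `∂⁴u/∂x²∂y²`. -/
def uxxyy (u : ℝ × ℝ → ℝ) : ℝ × ℝ → ℝ := pderivX (pderivX (pderivY (pderivY u)))

/-- The bilinear form `B(v,w) = ∫_Ω ∇v·∇w + ∫_Ω v w`, gradients taken a.e. -/
def Bform (v w : ℝ × ℝ → ℝ) : ℝ :=
  ∫ p in Omega2, (pderivX v p * pderivX w p + pderivY v p * pderivY w p + v p * w p)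

/-- The one-dimensional nodal piecewise linear interpolant on the uniform mesh. -/
def linInterp (N : ℕ) (f : ℝ → ℝ) (x : ℝ) : ℝ :=
  ∑ i ∈ range (N + 1), f ((i : ℝ) / N) * hat N i x

/-- The value at the midpoint of the `s`-th mesh interval minus the mean of the endpoint values. -/
def secondDiff (M s : ℕ) (f : ℝ → ℝ) : ℝ :=
  f ((2 * s + 1) / (2 * M)) - (f (s / M) + f ((s + 1) / M)) / 2

/-- The hat function of the `s`-th mesh interval, equal to one at its midpoint. -/
def bubble (M s : ℕ) (x : ℝ) : ℝ := 1 - |2 * M * x - (2 * s + 1)|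

lemma hat_eq_max {N : ℕ} (hN : 0 < N) (i : ℕ) (x : ℝ) :
    hat N i x = max 0 (1 - |N * x - i|) := by
  have hN' : (0 : ℝ) < N := by exact_mod_cast hN
  unfold hat
  simp only [div_le_iff₀ hN', le_div_iff₀ hN']
  split_ifs with h1 h2
  · rw [abs_of_nonpos (by linarith [h1.2]), max_eq_right (by linarith [h1.1])]
    field_simp; ring
  · rw [abs_of_nonneg (by linarith [h2.1]), max_eq_right (by linarith [h2.2])]
    field_simp; ring
  · rw [max_eq_left]
    by_contra hc
    push Not at hc
    have := abs_lt.1 (show |N * x - i| < 1 by linarith)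
    rcases le_total (x * N) i with h | h
    · exact h1 ⟨by linarith, h⟩
    · exact h2 ⟨h, by linarith⟩

lemma linInterp_eq {N j : ℕ} (hj : j < N) (f : ℝ → ℝ) {x : ℝ}
    (hx : (j : ℝ) / N ≤ x) (hx' : x ≤ (j + 1) / N) :
    linInterp N f x = f (j / N) * (j + 1 - N * x) + f ((j + 1) / N) * (N * x - j) := by
  have hN : 0 < N := by omega
  have hN' : (0 : ℝ) < N := by exact_mod_cast hN
  rw [div_le_iff₀ hN'] at hx
  rw [le_div_iff₀ hN'] at hx'
  unfold linInterp
  simp only [hat_eq_max hN]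
  rw [Finset.sum_eq_add j (j + 1) (by omega)]
  · push_cast
    rw [abs_of_nonneg (by linarith), abs_of_nonpos (by linarith),
      max_eq_right (by linarith), max_eq_right (by linarith)]
    ring
  · intro i _ hi
    rw [max_eq_left, mul_zero]
    rcases lt_or_ge i j with h | h
    · have : (i : ℝ) + 1 ≤ j := by exact_mod_cast h
      linarith [le_abs_self (N * x - i)]
    · have : (j : ℝ) + 2 ≤ i := by
        have : j + 2 ≤ i := by omega
        exact_mod_cast this
      linarith [neg_abs_le (N * x - i)]
  · intro h; simp at h; omega
  · intro h; simp at h; omega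

lemma linInterp_two_mul_sub {M s : ℕ} (hs : s < M) (f : ℝ → ℝ) {x : ℝ}
    (hx : (s : ℝ) / M ≤ x) (hx' : x ≤ (s + 1) / M) :
    linInterp (2 * M) f x - linInterp M f x = secondDiff M s f * bubble M s x := by
  have hM : (0 : ℝ) < M := by exact_mod_cast (by omega : 0 < M)
  have e0 : (2 * s : ℝ) / (2 * M) = s / M := by field_simp
  have e1 : (2 * s + 1 + 1 : ℝ) / (2 * M) = (s + 1) / M := by field_simp; ring
  rw [linInterp_eq hs f hx hx']
  have hx2 := hx
  have hx2' := hx'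
  rw [div_le_iff₀ hM] at hx2
  rw [le_div_iff₀ hM] at hx2'
  unfold secondDiff bubble
  rcases le_total (2 * M * x) (2 * s + 1) with h | h
  · rw [linInterp_eq (j := 2 * s) (by omega) f, abs_of_nonpos (by linarith)]
    · push_cast
      rw [e0]
      ring
    · push_cast
      rwa [e0]
    · push_cast
      rw [le_div_iff₀ (by positivity)]
      linarith
  · rw [linInterp_eq (j := 2 * s + 1) (by omega) f, abs_of_nonneg (by linarith)]
    · push_cast
      rw [e1]
      ring
    · push_cast
      rw [div_le_iff₀ (by positivity)]
      linarith
    · push_cast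
      rwa [e1]

lemma interp_eq_linInterp (Nx Ny : ℕ) (u : ℝ × ℝ → ℝ) (x y : ℝ) :
    interp Nx Ny u (x, y) =
      linInterp Nx (fun x' => linInterp Ny (fun y' => u (x', y')) y) x := by
  unfold interp linInterp
  refine Finset.sum_congr rfl fun i _ => ?_
  rw [Finset.sum_mul]
  exact Finset.sum_congr rfl fun j _ => by ring

lemma linInterp_sub (N : ℕ) (f g : ℝ → ℝ) (x : ℝ) :
    linInterp N f x - linInterp N g x = linInterp N (fun x => f x - g x) x := by
  unfold linInterp
  rw [← Finset.sum_sub_distrib]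
  exact Finset.sum_congr rfl fun i _ => by ring

/-- The hierarchical detail of `u` between the meshes of sizes `(M, L)` and `(2M, 2L)`. -/
def detail (M L : ℕ) (u : ℝ × ℝ → ℝ) (p : ℝ × ℝ) : ℝ :=
  interp (2 * M) (2 * L) u p - interp M (2 * L) u p - interp (2 * M) L u p + interp M L u p

/-- The mixed second difference of `u` on the mesh cell with indices `(s, t)`. -/
def mixedDiff (M L s t : ℕ) (u : ℝ × ℝ → ℝ) : ℝ :=
  secondDiff L t fun y => secondDiff M s fun x => u (x, y)

lemma detail_eq {M L s t : ℕ} (hs : s < M) (ht : t < L) (u : ℝ × ℝ → ℝ) {x y : ℝ}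
    (hx : x ∈ Set.Icc ((s : ℝ) / M) ((s + 1) / M))
    (hy : y ∈ Set.Icc ((t : ℝ) / L) ((t + 1) / L)) :
    detail M L u (x, y) = mixedDiff M L s t u * bubble M s x * bubble L t y := by
  have h : detail M L u (x, y) =
      (interp (2 * M) (2 * L) u (x, y) - interp (2 * M) L u (x, y)) -
        (interp M (2 * L) u (x, y) - interp M L u (x, y)) := by
    unfold detail; ring
  rw [h]
  simp only [interp_eq_linInterp, linInterp_sub]
  simp only [linInterp_two_mul_sub ht _ hy.1 hy.2]
  rw [linInterp_two_mul_sub hs _ hx.1 hx.2]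
  unfold mixedDiff secondDiff
  ring

lemma bubble_mem_Icc {M s : ℕ} (hM : 0 < M) {x : ℝ}
    (hx : x ∈ Set.Icc ((s : ℝ) / M) ((s + 1) / M)) : bubble M s x ∈ Set.Icc (0 : ℝ) 1 := by
  have hM' : (0 : ℝ) < M := by exact_mod_cast hM
  have h1 := hx.1
  have h2 := hx.2
  rw [div_le_iff₀ hM'] at h1
  rw [le_div_iff₀ hM'] at h2
  unfold bubble
  refine ⟨?_, by linarith [abs_nonneg (2 * M * x - (2 * s + 1))]⟩
  have := abs_le.2 (⟨by linarith, by linarith⟩ :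
    -1 ≤ 2 * M * x - (2 * s + 1) ∧ 2 * M * x - (2 * s + 1) ≤ 1)
  linarith

lemma exists_hasDerivAt_bubble {M s : ℕ} (hM : 0 < M) {x : ℝ} (hx : Irrational x) :
    ∃ d, HasDerivAt (bubble M s) d x ∧ d ^ 2 = 4 * (M : ℝ) ^ 2 := by
  have hM' : (0 : ℝ) < M := by exact_mod_cast hM
  have hne : 2 * M * x - (2 * s + 1) ≠ 0 := by
    intro h
    refine hx ⟨(2 * s + 1) / (2 * M), ?_⟩
    push_cast
    field_simp
    linarith
  have hl : HasDerivAt (fun x : ℝ => 2 * M * x - (2 * s + 1)) (2 * M) x := by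
    simpa using ((hasDerivAt_id x).const_mul (2 * M : ℝ)).sub_const (2 * s + 1 : ℝ)
  have hs := ((hasDerivAt_abs hne).comp x hl).const_sub 1
  refine ⟨_, hs, ?_⟩
  rcases lt_or_gt_of_ne hne with h | h
  · simp [sign_neg h]; ring
  · simp [sign_pos h]; ring

lemma exists_cell_index {M : ℕ} {x : ℝ} (hx : x ∈ Set.Ioo (0 : ℝ) 1)
    (hxi : Irrational x) (hM : 0 < M) :
    ∃ s < M, x ∈ Set.Ioo ((s : ℝ) / M) ((s + 1) / M) := by
  have hM' : (0 : ℝ) < M := by exact_mod_cast hM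
  have h0 : 0 ≤ M * x := mul_nonneg hM'.le hx.1.le
  refine ⟨⌊M * x⌋₊, ?_, ?_, ?_⟩
  · rw [Nat.floor_lt h0]
    nlinarith [hx.2]
  · refine lt_of_le_of_ne ?_ ?_
    · rw [div_le_iff₀ hM', mul_comm x]
      exact Nat.floor_le h0
    · intro h
      exact hxi ⟨(⌊M * x⌋₊ : ℚ) / M, by push_cast; exact h⟩
  · rw [lt_div_iff₀ hM', mul_comm]
    exact Nat.lt_floor_add_one _

lemma exists_hasDerivAt_detail {M L s t : ℕ} (hs : s < M) (ht : t < L) (u : ℝ × ℝ → ℝ)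
    {x y : ℝ} (hxi : Irrational x) (hx : x ∈ Set.Ioo ((s : ℝ) / M) ((s + 1) / M))
    (hy : y ∈ Set.Icc ((t : ℝ) / L) ((t + 1) / L)) :
    ∃ d, HasDerivAt (fun x' => detail M L u (x', y)) d x ∧
      d ^ 2 ≤ 4 * (M : ℝ) ^ 2 * mixedDiff M L s t u ^ 2 := by
  obtain ⟨d, hd, hd2⟩ := exists_hasDerivAt_bubble (M := M) (s := s) (by omega) hxi
  refine ⟨mixedDiff M L s t u * d * bubble L t y, ?_, ?_⟩
  · refine ((hd.const_mul _).mul_const _).congr_of_eventuallyEq ?_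
    filter_upwards [isOpen_Ioo.mem_nhds hx] with x' hx'
    exact detail_eq hs ht u (Set.Ioo_subset_Icc_self hx') hy
  · obtain ⟨h0, h1⟩ := bubble_mem_Icc (by omega : 0 < L) hy
    rw [mul_pow, mul_pow, hd2, mul_comm (mixedDiff M L s t u ^ 2)]
    exact mul_le_of_le_one_right (by positivity) (pow_le_one₀ h0 h1)

lemma mixedDiff_swap (M L s t : ℕ) (u : ℝ × ℝ → ℝ) :
    mixedDiff L M t s (fun p => u p.swap) = mixedDiff M L s t u := by
  simp only [mixedDiff, secondDiff, Prod.swap_prod_mk]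
  ring

lemma detail_swap (M L : ℕ) (u : ℝ × ℝ → ℝ) (x y : ℝ) :
    detail L M (fun p => u p.swap) (y, x) = detail M L u (x, y) := by
  have h (Nx Ny : ℕ) : interp Ny Nx (fun p => u p.swap) (y, x) = interp Nx Ny u (x, y) := by
    unfold interp
    rw [Finset.sum_comm]
    refine Finset.sum_congr rfl fun i _ => Finset.sum_congr rfl fun j _ => ?_
    simp only [Prod.swap_prod_mk]
    ring
  simp only [detail, h]
  ring

lemma sum_antidiagonal_telescope (F : ℕ → ℕ → ℝ) (k : ℕ) :
    ∑ i ∈ range (k + 1), F i (k - i) - ∑ i ∈ Finset.Icc 1 k, F i (k + 1 - i) - F 0 0 =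
      -∑ i ∈ range k, ∑ j ∈ range (k - i),
        (F i j - F (i + 1) j - F i (j + 1) + F (i + 1) (j + 1)) := by
  have inner (i : ℕ) : ∑ j ∈ range (k - i),
        (F i j - F (i + 1) j - F i (j + 1) + F (i + 1) (j + 1)) =
      (F i 0 - F (i + 1) 0) - (F i (k - i) - F (i + 1) (k - i)) := by
    rw [← Finset.sum_range_sub' (fun j => F i j - F (i + 1) j)]
    exact Finset.sum_congr rfl fun j _ => by ring
  have shift : ∑ i ∈ Finset.Icc 1 k, F i (k + 1 - i) = ∑ i ∈ range k, F (i + 1) (k - i) := by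
    have h := Finset.sum_Ico_add' (fun i => F i (k + 1 - i)) 0 k 1
    rw [Finset.range_eq_Ico]
    simp only [Nat.add_sub_add_right] at h
    exact h.symm
  simp only [inner, Finset.sum_sub_distrib]
  rw [← Finset.sum_sub_distrib (fun i => F i 0), Finset.sum_range_sub' (fun i => F i 0), shift,
    Finset.sum_range_succ, Nat.sub_self]
  ring

lemma msInterp_sub_interp {m k : ℕ} (hk : k ≤ m) (u : ℝ × ℝ → ℝ) (p : ℝ × ℝ) :
    msInterp (2 ^ m) k u p - interp (2 ^ m) (2 ^ m) u p =
      -∑ i ∈ range k, ∑ j ∈ range (k - i), detail (2 ^ (m - i - 1)) (2 ^ (m - j - 1)) u p := by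
  have h := sum_antidiagonal_telescope (fun i j => interp (2 ^ m / 2 ^ i) (2 ^ m / 2 ^ j) u p) k
  simp only [pow_zero, Nat.div_one] at h
  unfold msInterp
  rw [h, neg_inj]
  refine Finset.sum_congr rfl fun i hi => Finset.sum_congr rfl fun j hj => ?_
  rw [Finset.mem_range] at hi hj
  have e (i : ℕ) (hi : i < m) : 2 ^ m / 2 ^ i = 2 * 2 ^ (m - i - 1) ∧
      2 ^ m / 2 ^ (i + 1) = 2 ^ (m - i - 1) := by
    rw [Nat.pow_div hi.le (by norm_num), Nat.pow_div (by omega) (by norm_num), ← pow_succ']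
    exact ⟨by congr 1; omega, by congr 1⟩
  rw [(e i (by omega)).1, (e i (by omega)).2, (e j (by omega)).1, (e j (by omega)).2]
  rfl

lemma sq_integral_abs_le {a b : ℝ} (hab : a < b) {g : ℝ → ℝ} (hg : ContinuousOn g (Set.Icc a b)) :
    (∫ x in a..b, |g x|) ^ 2 ≤ (b - a) * ∫ x in a..b, g x ^ 2 := by
  rw [← Set.uIcc_of_le hab.le] at hg
  have h1 : IntervalIntegrable (fun x => |g x|) volume a b := hg.abs.intervalIntegrable
  have h2 : IntervalIntegrable (fun x => g x ^ 2) volume a b := (hg.pow 2).intervalIntegrable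
  set J := ∫ x in a..b, |g x| with hJ
  set c := J / (b - a) with hc
  have hcJ : c * (b - a) = J := div_mul_cancel₀ _ (by linarith)
  have key : 0 ≤ ∫ x in a..b, (g x ^ 2 - 2 * c * |g x| + c ^ 2) := by
    refine intervalIntegral.integral_nonneg hab.le fun x _ => ?_
    nlinarith [sq_nonneg (|g x| - c), sq_abs (g x)]
  rw [intervalIntegral.integral_add (h2.sub (h1.const_mul _)) (by simp),
    intervalIntegral.integral_sub h2 (h1.const_mul _), intervalIntegral.integral_const_mul,
    intervalIntegral.integral_const, smul_eq_mul, ← hJ] at key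
  have hpos : 0 ≤ b - a := by linarith
  have := mul_nonneg hpos key
  nlinarith

lemma sq_midpoint_sub_mean_le {f f' f'' : ℝ → ℝ} {c h : ℝ} (hh : 0 < h)
    (hf : ∀ x ∈ Set.Icc (c - h) (c + h), HasDerivAt f (f' x) x)
    (hf' : ∀ x ∈ Set.Icc (c - h) (c + h), HasDerivAt f' (f'' x) x)
    (hf'' : ContinuousOn f'' (Set.Icc (c - h) (c + h))) :
    (f c - (f (c - h) + f (c + h)) / 2) ^ 2 ≤ 2 * h ^ 3 * ∫ x in (c - h)..(c + h), f'' x ^ 2 := by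
  set J := ∫ x in (c - h)..(c + h), |f'' x| with hJ
  have hle : c - h ≤ c + h := by linarith
  have hint : IntervalIntegrable (fun x => |f'' x|) volume (c - h) (c + h) :=
    (hf''.abs.mono (by rw [Set.uIcc_of_le hle])).intervalIntegrable
  have hcm : c ∈ Set.Icc (c - h) (c + h) := ⟨by linarith, by linarith⟩
  have hslope : ∀ x ∈ Set.Icc (c - h) (c + h), ‖f' x - f' c‖ ≤ J := by
    intro x hx
    have hsub : Set.uIcc c x ⊆ Set.Icc (c - h) (c + h) := Set.uIcc_subset_Icc hcm hx
    have hii : IntervalIntegrable f'' volume c x := (hf''.mono hsub).intervalIntegrable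
    rw [← intervalIntegral.integral_eq_sub_of_hasDerivAt (fun y hy => hf' y (hsub hy)) hii]
    refine (intervalIntegral.norm_integral_le_abs_integral_norm).trans ?_
    rw [intervalIntegral.abs_integral_eq_abs_integral_uIoc, abs_of_nonneg
      (integral_nonneg fun _ => norm_nonneg _), hJ, intervalIntegral.integral_of_le hle]
    refine setIntegral_mono_set hint.1 (Filter.Eventually.of_forall fun _ => abs_nonneg _) ?_
    refine Filter.Eventually.of_forall fun y hy => ?_
    rcases le_total c x with hcx | hcx
    · rw [Set.uIoc_of_le hcx] at hy
      exact ⟨by linarith [hy.1], hy.2.trans hx.2⟩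
    · rw [Set.uIoc_of_ge hcx] at hy
      exact ⟨lt_of_le_of_lt hx.1 hy.1, by linarith [hy.2]⟩
  have htaylor : ∀ x ∈ Set.Icc (c - h) (c + h), ‖(f x - f' c * x) - (f c - f' c * c)‖ ≤
      J * ‖x - c‖ := by
    intro x hx
    refine Convex.norm_image_sub_le_of_norm_hasDerivWithin_le (f := fun x => f x - f' c * x)
      (f' := fun x => f' x - f' c) (s := Set.Icc (c - h) (c + h)) ?_ hslope (convex_Icc _ _) hcm hx
    intro y hy
    simpa using ((hf y hy).fun_sub ((hasDerivAt_id y).const_mul (f' c))).hasDerivWithinAt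
  have hJ0 : 0 ≤ J := (norm_nonneg _).trans (hslope c hcm)
  have h1 := htaylor (c - h) ⟨le_rfl, by linarith⟩
  have h2 := htaylor (c + h) ⟨by linarith, le_rfl⟩
  simp only [Real.norm_eq_abs] at h1 h2
  rw [show |c - h - c| = h by rw [show c - h - c = -h by ring, abs_neg, abs_of_pos hh]] at h1
  rw [show |c + h - c| = h by rw [show c + h - c = h by ring, abs_of_pos hh]] at h2
  have h3 : |f c - (f (c - h) + f (c + h)) / 2| ≤ J * h := by
    rw [abs_le] at h1 h2 ⊢
    constructor <;> linarith [h1.1, h1.2, h2.1, h2.2]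
  have h4 : J ^ 2 ≤ 2 * h * ∫ x in (c - h)..(c + h), f'' x ^ 2 := by
    have := sq_integral_abs_le (by linarith : c - h < c + h) hf''
    rwa [show c + h - (c - h) = 2 * h by ring] at this
  calc _ = |f c - (f (c - h) + f (c + h)) / 2| ^ 2 := (sq_abs _).symm
    _ ≤ (J * h) ^ 2 := by gcongr
    _ = h ^ 2 * J ^ 2 := by ring
    _ ≤ h ^ 2 * (2 * h * ∫ x in (c - h)..(c + h), f'' x ^ 2) := by gcongr
    _ = _ := by ring

lemma Icc_cell_subset {M s : ℕ} (hs : s < M) :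
    Set.Icc ((s : ℝ) / M) ((s + 1) / M) ⊆ Set.Icc 0 1 := by
  have hM : (0 : ℝ) < M := by exact_mod_cast (by omega : 0 < M)
  refine Set.Icc_subset_Icc (by positivity) ?_
  rw [div_le_one hM]
  exact_mod_cast hs

lemma secondDiff_sq_le {M s : ℕ} (hs : s < M) {f f' f'' : ℝ → ℝ}
    (hf : ∀ x ∈ Set.Icc (0 : ℝ) 1, HasDerivAt f (f' x) x)
    (hf' : ∀ x ∈ Set.Icc (0 : ℝ) 1, HasDerivAt f' (f'' x) x)
    (hf'' : ContinuousOn f'' (Set.Icc (0 : ℝ) 1)) :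
    secondDiff M s f ^ 2 ≤
      1 / (4 * (M : ℝ) ^ 3) * ∫ x in Set.Ioc ((s : ℝ) / M) ((s + 1) / M), f'' x ^ 2 := by
  have hM : (0 : ℝ) < M := by exact_mod_cast (by omega : 0 < M)
  have e1 : (2 * s + 1 : ℝ) / (2 * M) - 1 / (2 * M) = s / M := by field_simp; ring
  have e2 : (2 * s + 1 : ℝ) / (2 * M) + 1 / (2 * M) = (s + 1) / M := by field_simp; ring
  have hsub := Icc_cell_subset hs
  have h := sq_midpoint_sub_mean_le (f := f) (f' := f') (f'' := f'')
    (c := (2 * s + 1 : ℝ) / (2 * M)) (h := 1 / (2 * M)) (by positivity)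
  rw [e1, e2] at h
  have h' := h (fun x hx => hf x (hsub hx)) (fun x hx => hf' x (hsub hx)) (hf''.mono hsub)
  rw [intervalIntegral.integral_of_le (by gcongr; linarith)] at h'
  refine h'.trans_eq ?_
  congr 1
  field_simp
  norm_num

lemma hasDerivAt_pderivX {U : Set (ℝ × ℝ)} (hU : IsOpen U) {n : WithTop ℕ∞} (hn : n ≠ 0)
    {u : ℝ × ℝ → ℝ} (hu : ContDiffOn ℝ n u U) {x y : ℝ} (hp : (x, y) ∈ U) :
    HasDerivAt (fun x' => u (x', y)) (pderivX u (x, y)) x ∧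
      pderivX u (x, y) = fderiv ℝ u (x, y) (1, 0) := by
  have hd := ((hu.differentiableOn hn).differentiableAt (hU.mem_nhds hp)).hasFDerivAt
  have h : HasDerivAt (fun x' => u (x', y)) (fderiv ℝ u (x, y) (1, 0)) x :=
    hd.comp_hasDerivAt x ((hasDerivAt_id x).prodMk (hasDerivAt_const x y))
  have e : pderivX u (x, y) = fderiv ℝ u (x, y) (1, 0) := h.deriv
  exact ⟨e ▸ h, e⟩

lemma hasDerivAt_pderivY {U : Set (ℝ × ℝ)} (hU : IsOpen U) {n : WithTop ℕ∞} (hn : n ≠ 0)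
    {u : ℝ × ℝ → ℝ} (hu : ContDiffOn ℝ n u U) {x y : ℝ} (hp : (x, y) ∈ U) :
    HasDerivAt (fun y' => u (x, y')) (pderivY u (x, y)) y ∧
      pderivY u (x, y) = fderiv ℝ u (x, y) (0, 1) := by
  have hd := ((hu.differentiableOn hn).differentiableAt (hU.mem_nhds hp)).hasFDerivAt
  have h : HasDerivAt (fun y' => u (x, y')) (fderiv ℝ u (x, y) (0, 1)) y :=
    hd.comp_hasDerivAt y ((hasDerivAt_const y x).prodMk (hasDerivAt_id y))
  have e : pderivY u (x, y) = fderiv ℝ u (x, y) (0, 1) := h.deriv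
  exact ⟨e ▸ h, e⟩

lemma contDiffOn_pderivX {U : Set (ℝ × ℝ)} (hU : IsOpen U) {n : WithTop ℕ∞}
    {u : ℝ × ℝ → ℝ} (hu : ContDiffOn ℝ (n + 1) u U) : ContDiffOn ℝ n (pderivX u) U :=
  ((hu.fderiv_of_isOpen hU le_rfl).clm_apply contDiffOn_const).congr
    fun _ hp => (hasDerivAt_pderivX hU (by simp) hu hp).2

lemma contDiffOn_pderivY {U : Set (ℝ × ℝ)} (hU : IsOpen U) {n : WithTop ℕ∞}
    {u : ℝ × ℝ → ℝ} (hu : ContDiffOn ℝ (n + 1) u U) : ContDiffOn ℝ n (pderivY u) U :=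
  ((hu.fderiv_of_isOpen hU le_rfl).clm_apply contDiffOn_const).congr
    fun _ hp => (hasDerivAt_pderivY hU (by simp) hu hp).2

/-- The half-open mesh cell with indices `(s, t)`. -/
def cell (M L s t : ℕ) : Set (ℝ × ℝ) :=
  Set.Ioc ((s : ℝ) / M) ((s + 1) / M) ×ˢ Set.Ioc ((t : ℝ) / L) ((t + 1) / L)

lemma continuousOn_uxxyy {u : ℝ × ℝ → ℝ} (hu : C4Near u) : ContinuousOn (uxxyy u) unitSquare := by
  obtain ⟨U, hU, hsub, hu⟩ := hu
  have h3 : ContDiffOn ℝ 3 (pderivY u) U := contDiffOn_pderivY hU (by norm_num; exact hu)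
  have h2 : ContDiffOn ℝ 2 (pderivY (pderivY u)) U := contDiffOn_pderivY hU (by norm_num; exact h3)
  have h1 : ContDiffOn ℝ 1 (pderivX (pderivY (pderivY u))) U :=
    contDiffOn_pderivX hU (by norm_num; exact h2)
  have h0 : ContDiffOn ℝ 0 (uxxyy u) U := contDiffOn_pderivX hU (by norm_num; exact h1)
  exact h0.continuousOn.mono hsub

lemma cell_subset {M L s t : ℕ} (hs : s < M) (ht : t < L) : cell M L s t ⊆ unitSquare :=
  Set.prod_mono (Set.Ioc_subset_Icc_self.trans (Icc_cell_subset hs))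
    (Set.Ioc_subset_Icc_self.trans (Icc_cell_subset ht))

lemma integrableOn_uxxyy_sq {u : ℝ × ℝ → ℝ} (hu : C4Near u) :
    IntegrableOn (fun p => uxxyy u p ^ 2) unitSquare :=
  ((continuousOn_uxxyy hu).pow 2).integrableOn_compact (isCompact_Icc.prod isCompact_Icc)

lemma mixedDiff_sq_le {M L s t : ℕ} (hs : s < M) (ht : t < L) {u : ℝ × ℝ → ℝ} (hu : C4Near u) :
    mixedDiff M L s t u ^ 2 ≤
      1 / (16 * (M : ℝ) ^ 3 * (L : ℝ) ^ 3) * ∫ p in cell M L s t, uxxyy u p ^ 2 := by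
  have hM : (0 : ℝ) < M := by exact_mod_cast (by omega : 0 < M)
  have hL : (0 : ℝ) < L := by exact_mod_cast (by omega : 0 < L)
  have hint := (integrableOn_uxxyy_sq hu).mono_set (cell_subset hs ht)
  have hcont := continuousOn_uxxyy hu
  obtain ⟨U, hU, hsub, hu⟩ := hu
  have h3 : ContDiffOn ℝ 3 (pderivY u) U := contDiffOn_pderivY hU (by norm_num; exact hu)
  have h2 : ContDiffOn ℝ 2 (pderivY (pderivY u)) U := contDiffOn_pderivY hU (by norm_num; exact h3)
  have h1 : ContDiffOn ℝ 1 (pderivX (pderivY (pderivY u))) U :=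
    contDiffOn_pderivX hU (by norm_num; exact h2)
  have hmem {x y : ℝ} (hx : x ∈ Set.Icc (0 : ℝ) 1) (hy : y ∈ Set.Icc (0 : ℝ) 1) : (x, y) ∈ U :=
    hsub ⟨hx, hy⟩
  have hx0 : (s / M : ℝ) ∈ Set.Icc (0 : ℝ) 1 :=
    Icc_cell_subset hs ⟨le_rfl, by gcongr; linarith⟩
  have hx1 : ((2 * s + 1) / (2 * M) : ℝ) ∈ Set.Icc (0 : ℝ) 1 :=
    Icc_cell_subset hs ⟨by rw [div_le_div_iff₀ hM (by positivity)]; nlinarith,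
      by rw [div_le_div_iff₀ (by positivity) hM]; nlinarith⟩
  have hx2 : ((s + 1) / M : ℝ) ∈ Set.Icc (0 : ℝ) 1 :=
    Icc_cell_subset hs ⟨by gcongr; linarith, le_rfl⟩
  have hderiv {n : WithTop ℕ∞} (hn : n ≠ 0) {v : ℝ × ℝ → ℝ} (hv : ContDiffOn ℝ n v U)
      {y : ℝ} (hy : y ∈ Set.Icc (0 : ℝ) 1) :
      HasDerivAt (fun y => secondDiff M s fun x => v (x, y))
        (secondDiff M s fun x => pderivY v (x, y)) y :=
    (hasDerivAt_pderivY hU hn hv (hmem hx1 hy)).1.sub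
      (((hasDerivAt_pderivY hU hn hv (hmem hx0 hy)).1.add
        (hasDerivAt_pderivY hU hn hv (hmem hx2 hy)).1).div_const 2)
  have hslice {x : ℝ} (hx : x ∈ Set.Icc (0 : ℝ) 1) :
      ContinuousOn (fun y => pderivY (pderivY u) (x, y)) (Set.Icc (0 : ℝ) 1) :=
    h2.continuousOn.comp (by fun_prop) fun y hy => hmem hx hy
  have hy := secondDiff_sq_le ht (fun y hy => hderiv (by norm_num) hu hy)
    (fun y hy => hderiv (by norm_num) h3 hy)
    ((hslice hx1).sub (((hslice hx0).add (hslice hx2)).div_const 2))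
  have hx {y : ℝ} (hy : y ∈ Set.Icc (0 : ℝ) 1) := secondDiff_sq_le hs
    (f := fun x => pderivY (pderivY u) (x, y)) (f'' := fun x => uxxyy u (x, y))
    (fun x hx => (hasDerivAt_pderivX hU (by norm_num) h2 (hmem hx hy)).1)
    (fun x hx => (hasDerivAt_pderivX hU (by norm_num) h1 (hmem hx hy)).1)
    (hcont.comp (by fun_prop) fun x hx => ⟨hx, hy⟩)
  unfold cell at hint ⊢
  rw [IntegrableOn, Measure.volume_eq_prod, ← Measure.prod_restrict] at hint
  rw [Measure.volume_eq_prod, ← Measure.prod_restrict, integral_prod_symm _ hint]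
  have hmono : ∫ y in Set.Ioc ((t : ℝ) / L) ((t + 1) / L),
        (secondDiff M s fun x => pderivY (pderivY u) (x, y)) ^ 2 ≤
      ∫ y in Set.Ioc ((t : ℝ) / L) ((t + 1) / L), 1 / (4 * (M : ℝ) ^ 3) *
        ∫ x in Set.Ioc ((s : ℝ) / M) ((s + 1) / M), uxxyy u (x, y) ^ 2 := by
    refine integral_mono_of_nonneg (Filter.Eventually.of_forall fun _ => sq_nonneg _)
      (hint.integral_prod_right.const_mul _) ?_
    filter_upwards [ae_restrict_mem measurableSet_Ioc] with y hy
    exact hx (Icc_cell_subset ht (Set.Ioc_subset_Icc_self hy))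
  refine hy.trans ((mul_le_mul_of_nonneg_left hmono (by positivity)).trans_eq ?_)
  rw [integral_const_mul, ← mul_assoc]
  congr 1
  field_simp
  norm_num

/-- The piecewise constant function equal to the squared mixed second difference on each cell. -/
def cellSum (M L : ℕ) (u : ℝ × ℝ → ℝ) (p : ℝ × ℝ) : ℝ :=
  ∑ q ∈ range M ×ˢ range L, (cell M L q.1 q.2).indicator (fun _ => mixedDiff M L q.1 q.2 u ^ 2) p

lemma measurableSet_cell (M L s t : ℕ) : MeasurableSet (cell M L s t) :=
  measurableSet_Ioc.prod measurableSet_Ioc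

lemma Omega2_ae_eq_unitSquare : Omega2 =ᵐ[volume] unitSquare :=
  Measure.set_prod_ae_eq Ioo_ae_eq_Icc Ioo_ae_eq_Icc

lemma volume_real_cell (M L s t : ℕ) : volume.real (cell M L s t) = 1 / (M * L) := by
  have h (N i : ℕ) : ((i : ℝ) + 1) / N - i / N = 1 / N := by ring
  rw [cell, Measure.volume_eq_prod, measureReal_prod_prod, Real.volume_real_Ioc_of_le,
    Real.volume_real_Ioc_of_le, h, h, one_div_mul_one_div]
  all_goals gcongr; linarith

lemma Ioc_cell_disjoint {M s s' : ℕ} (h : s ≠ s') :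
    Disjoint (Set.Ioc ((s : ℝ) / M) ((s + 1) / M)) (Set.Ioc ((s' : ℝ) / M) ((s' + 1) / M)) := by
  wlog hlt : s < s' generalizing s s'
  · exact (this h.symm (by omega)).symm
  have : (s : ℝ) + 1 ≤ s' := by exact_mod_cast hlt
  refine Set.disjoint_left.2 fun x hx hx' => ?_
  have : ((s : ℝ) + 1) / M ≤ s' / M := by gcongr
  linarith [hx.2, hx'.1]

lemma pairwise_disjoint_cell (M L : ℕ) :
    Pairwise (Function.onFun Disjoint fun q : ℕ × ℕ => cell M L q.1 q.2) := by
  intro q q' h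
  refine Set.disjoint_prod.2 ?_
  by_cases h1 : q.1 = q'.1
  · exact Or.inr (Ioc_cell_disjoint fun h2 => h (Prod.ext h1 h2))
  · exact Or.inl (Ioc_cell_disjoint h1)

lemma integrableOn_cell_indicator (M L s t : ℕ) (a : ℝ) :
    IntegrableOn ((cell M L s t).indicator fun _ => a) unitSquare := by
  have : IsFiniteMeasure (volume.restrict unitSquare) :=
    ⟨by
      rw [Measure.restrict_apply_univ]
      exact (isCompact_Icc.prod isCompact_Icc).measure_lt_top⟩
  exact (integrable_const a).indicator (measurableSet_cell M L s t)

lemma integrableOn_cellSum (M L : ℕ) (u : ℝ × ℝ → ℝ) : IntegrableOn (cellSum M L u) Omega2 := by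
  rw [integrableOn_congr_set_ae Omega2_ae_eq_unitSquare]
  exact integrable_finsetSum _ fun q _ => integrableOn_cell_indicator M L q.1 q.2 _

lemma integral_cellSum_le {M L : ℕ} (hM : 0 < M) (hL : 0 < L) {u : ℝ × ℝ → ℝ} (hu : C4Near u) :
    ∫ p in Omega2, cellSum M L u p ≤
      1 / (16 * (M : ℝ) ^ 4 * (L : ℝ) ^ 4) * ∫ p in Omega2, uxxyy u p ^ 2 := by
  have hM' : (0 : ℝ) < M := by exact_mod_cast hM
  have hL' : (0 : ℝ) < L := by exact_mod_cast hL
  have hint := integrableOn_uxxyy_sq hu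
  have hsub : ∀ q ∈ range M ×ˢ range L, cell M L q.1 q.2 ⊆ unitSquare := fun q hq =>
    cell_subset (mem_range.1 (mem_product.1 hq).1) (mem_range.1 (mem_product.1 hq).2)
  rw [setIntegral_congr_set Omega2_ae_eq_unitSquare, setIntegral_congr_set Omega2_ae_eq_unitSquare]
  unfold cellSum
  rw [integral_finsetSum (μ := volume.restrict unitSquare) _
    fun (q : ℕ × ℕ) _ => integrableOn_cell_indicator M L q.1 q.2 (mixedDiff M L q.1 q.2 u ^ 2)]
  calc _ ≤ ∑ q ∈ range M ×ˢ range L, 1 / (16 * (M : ℝ) ^ 4 * (L : ℝ) ^ 4) *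
          ∫ p in cell M L q.1 q.2, uxxyy u p ^ 2 := by
        refine Finset.sum_le_sum fun q hq => ?_
        rw [setIntegral_indicator (measurableSet_cell _ _ _ _),
          Set.inter_eq_self_of_subset_right (hsub q hq), setIntegral_const, volume_real_cell,
          smul_eq_mul]
        refine (mul_le_mul_of_nonneg_left (mixedDiff_sq_le (mem_range.1 (mem_product.1 hq).1)
          (mem_range.1 (mem_product.1 hq).2) hu) (by positivity)).trans_eq ?_
        rw [← mul_assoc]
        congr 1
        field_simp
    _ = 1 / (16 * (M : ℝ) ^ 4 * (L : ℝ) ^ 4) *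
          ∫ p in ⋃ q ∈ range M ×ˢ range L, cell M L q.1 q.2, uxxyy u p ^ 2 := by
        rw [← Finset.mul_sum, integral_biUnion_finset _ (fun q _ => measurableSet_cell _ _ _ _)
          ((pairwise_disjoint_cell M L).set_pairwise _) fun q hq => hint.mono_set (hsub q hq)]
    _ ≤ _ := by
        refine mul_le_mul_of_nonneg_left ?_ (by positivity)
        exact setIntegral_mono_set hint (Filter.Eventually.of_forall fun _ => sq_nonneg _)
          (Set.iUnion₂_subset hsub).eventuallyLE

lemma detail_bounds {M L : ℕ} (hM : 0 < M) (hL : 0 < L) (u : ℝ × ℝ → ℝ) {p : ℝ × ℝ}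
    (hp : p ∈ Omega2) (h1 : Irrational p.1) (h2 : Irrational p.2) :
    (∃ d, HasDerivAt (fun x => detail M L u (x, p.2)) d p.1 ∧
      d ^ 2 ≤ 4 * (M : ℝ) ^ 2 * cellSum M L u p) ∧
    (∃ d, HasDerivAt (fun y => detail M L u (p.1, y)) d p.2 ∧
      d ^ 2 ≤ 4 * (L : ℝ) ^ 2 * cellSum M L u p) ∧
    detail M L u p ^ 2 ≤ cellSum M L u p := by
  obtain ⟨s, hs, hx⟩ := exists_cell_index hp.1 h1 hM
  obtain ⟨t, ht, hy⟩ := exists_cell_index hp.2 h2 hL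
  have hx' := Set.Ioo_subset_Icc_self hx
  have hy' := Set.Ioo_subset_Icc_self hy
  have hE : mixedDiff M L s t u ^ 2 ≤ cellSum M L u p := by
    have hmem : p ∈ cell M L s t := ⟨Set.Ioo_subset_Ioc_self hx, Set.Ioo_subset_Ioc_self hy⟩
    have := Finset.single_le_sum (f := fun q : ℕ × ℕ =>
        (cell M L q.1 q.2).indicator (fun _ => mixedDiff M L q.1 q.2 u ^ 2) p)
      (fun q _ => Set.indicator_nonneg (fun _ _ => sq_nonneg _) _)
      (mem_product.2 ⟨mem_range.2 hs, mem_range.2 ht⟩ : (s, t) ∈ range M ×ˢ range L)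
    simpa only [Set.indicator_of_mem hmem, cellSum] using this
  refine ⟨?_, ?_, ?_⟩
  · obtain ⟨d, hd, hle⟩ := exists_hasDerivAt_detail hs ht u h1 hx hy'
    exact ⟨d, hd, hle.trans (by gcongr)⟩
  · obtain ⟨d, hd, hle⟩ := exists_hasDerivAt_detail ht hs (fun q => u q.swap) h2 hy hx'
    simp only [detail_swap, mixedDiff_swap] at hd hle
    exact ⟨d, hd, hle.trans (by gcongr)⟩
  · obtain ⟨a0, a1⟩ := bubble_mem_Icc hM hx'
    obtain ⟨b0, b1⟩ := bubble_mem_Icc hL hy'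
    refine le_trans ?_ hE
    rw [← Prod.mk.eta (p := p), detail_eq hs ht u hx' hy', mul_assoc, mul_pow]
    exact mul_le_of_le_one_right (sq_nonneg _)
      (pow_le_one₀ (mul_nonneg a0 b0) (mul_le_one₀ a1 b0 b1))

lemma ae_irrational_coords : ∀ᵐ p : ℝ × ℝ, Irrational p.1 ∧ Irrational p.2 := by
  have h : ∀ᵐ x : ℝ, Irrational x := (Set.countable_range ((↑) : ℚ → ℝ)).ae_notMem volume
  exact (Measure.quasiMeasurePreserving_fst.ae h).and (Measure.quasiMeasurePreserving_snd.ae h)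

lemma sq_sum_le_weighted {ι : Type*} (T : Finset ι) {a r b : ι → ℝ} (ha : ∀ i ∈ T, 0 < a i)
    (hr : ∀ i ∈ T, r i ^ 2 ≤ b i) : (∑ i ∈ T, r i) ^ 2 ≤ (∑ i ∈ T, a i) * ∑ i ∈ T, b i / a i := by
  refine (Finset.sum_sq_le_sum_mul_sum_of_sq_le_mul T (f := a) (g := fun i => r i ^ 2 / a i)
    (fun i hi => (ha i hi).le) (fun i hi => div_nonneg (sq_nonneg _) (ha i hi).le)
    fun i hi => (mul_div_cancel₀ _ (ha i hi).ne').ge).trans ?_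
  refine mul_le_mul_of_nonneg_left (Finset.sum_le_sum fun i hi => ?_)
    (Finset.sum_nonneg fun i hi => (ha i hi).le)
  exact div_le_div_of_nonneg_right (hr i hi) (ha i hi).le

lemma energyNorm_sum_detail_le {ι : Type*} (T : Finset ι) {M L : ι → ℕ} (hM : ∀ i, 0 < M i)
    (hL : ∀ i, 0 < L i) {u : ℝ × ℝ → ℝ} (hu : C4Near u) {S : ℝ}
    (hSx : ∑ i ∈ T, 1 / ((M i : ℝ) * (L i : ℝ) ^ 2) ≤ S)
    (hSy : ∑ i ∈ T, 1 / ((M i : ℝ) ^ 2 * (L i : ℝ)) ≤ S) :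
    energyNorm (fun p => -∑ i ∈ T, detail (M i) (L i) u p) ≤ S * L2norm (uxxyy u) := by
  have hM' (i : ι) : (0 : ℝ) < M i := by exact_mod_cast hM i
  have hL' (i : ι) : (0 : ℝ) < L i := by exact_mod_cast hL i
  set E : ι → ℝ × ℝ → ℝ := fun i => cellSum (M i) (L i) u with hE
  set Q := ∫ p in Omega2, uxxyy u p ^ 2 with hQ
  set a : ι → ℝ := fun i => 1 / ((M i : ℝ) * (L i : ℝ) ^ 2) with ha
  set b : ι → ℝ := fun i => 1 / ((M i : ℝ) ^ 2 * (L i : ℝ)) with hb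
  have ha0 (i : ι) : 0 < a i := by have := hM' i; have := hL' i; positivity
  have hb0 (i : ι) : 0 < b i := by have := hM' i; have := hL' i; positivity
  have hA0 : 0 ≤ ∑ i ∈ T, a i := Finset.sum_nonneg fun i _ => (ha0 i).le
  have hB0 : 0 ≤ ∑ i ∈ T, b i := Finset.sum_nonneg fun i _ => (hb0 i).le
  have hS0 : 0 ≤ S := hA0.trans hSx
  have hQ0 : 0 ≤ Q := integral_nonneg fun _ => sq_nonneg _
  have hEint (i : ι) : IntegrableOn (E i) Omega2 := integrableOn_cellSum _ _ _
  have hterm (i : ι) (c : ℝ) : IntegrableOn (fun p => c * E i p) Omega2 := (hEint i).const_mul c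
  have hIx : IntegrableOn (fun p => ∑ i ∈ T, 4 * (M i : ℝ) ^ 2 * E i p / a i) Omega2 :=
    integrable_finsetSum _ fun i _ => (hterm i _).div_const _
  have hIy : IntegrableOn (fun p => ∑ i ∈ T, 4 * (L i : ℝ) ^ 2 * E i p / b i) Omega2 :=
    integrable_finsetSum _ fun i _ => (hterm i _).div_const _
  have hEle (i : ι) : ∫ p in Omega2, E i p ≤
      1 / (16 * (M i : ℝ) ^ 4 * (L i : ℝ) ^ 4) * Q := integral_cellSum_le (hM i) (hL i) hu
  have hIx' : ∫ p in Omega2, ∑ i ∈ T, 4 * (M i : ℝ) ^ 2 * E i p / a i ≤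
      (∑ i ∈ T, a i) * (Q / 4) := by
    rw [integral_finsetSum _ fun i _ => (hterm i _).div_const _, Finset.sum_mul]
    refine Finset.sum_le_sum fun i _ => ?_
    have := hM' i
    have := hL' i
    rw [integral_div, integral_const_mul, div_le_iff₀ (ha0 i)]
    refine (mul_le_mul_of_nonneg_left (hEle i) (by positivity)).trans_eq ?_
    simp only [ha]
    field_simp
    norm_num
  have hIy' : ∫ p in Omega2, ∑ i ∈ T, 4 * (L i : ℝ) ^ 2 * E i p / b i ≤
      (∑ i ∈ T, b i) * (Q / 4) := by
    rw [integral_finsetSum _ fun i _ => (hterm i _).div_const _, Finset.sum_mul]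
    refine Finset.sum_le_sum fun i _ => ?_
    have := hM' i
    have := hL' i
    rw [integral_div, integral_const_mul, div_le_iff₀ (hb0 i)]
    refine (mul_le_mul_of_nonneg_left (hEle i) (by positivity)).trans_eq ?_
    simp only [hb]
    field_simp
    norm_num
  rw [energyNorm, L2norm, ← hQ]
  refine Real.sqrt_le_iff.2 ⟨mul_nonneg hS0 (Real.sqrt_nonneg _), ?_⟩
  rw [mul_pow, Real.sq_sqrt hQ0]
  calc _ ≤ ∫ p in Omega2, (2 * (∑ i ∈ T, a i) * (∑ i ∈ T, 4 * (M i : ℝ) ^ 2 * E i p / a i) +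
        (∑ i ∈ T, b i) * ∑ i ∈ T, 4 * (L i : ℝ) ^ 2 * E i p / b i) := by
        refine integral_mono_of_nonneg (Filter.Eventually.of_forall fun _ => by positivity)
          ((hIx.const_mul _).add (hIy.const_mul _)) ?_
        filter_upwards [ae_restrict_mem (measurableSet_Ioo.prod measurableSet_Ioo),
          ae_restrict_of_ae ae_irrational_coords] with p hp hirr
        choose hdx hdy hv using fun i => detail_bounds (hM i) (hL i) u hp hirr.1 hirr.2
        choose dx hdx hdx' using hdx
        choose dy hdy hdy' using hdy
        have ex : pderivX (fun p => -∑ i ∈ T, detail (M i) (L i) u p) p = -∑ i ∈ T, dx i :=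
          (HasDerivAt.fun_sum fun i _ => hdx i).fun_neg.deriv
        have ey : pderivY (fun p => -∑ i ∈ T, detail (M i) (L i) u p) p = -∑ i ∈ T, dy i :=
          (HasDerivAt.fun_sum fun i _ => hdy i).fun_neg.deriv
        have bx := sq_sum_le_weighted T (fun i _ => ha0 i) fun i _ => hdx' i
        have bv := sq_sum_le_weighted T (r := fun i => detail (M i) (L i) u p)
          (b := fun i => 4 * (M i : ℝ) ^ 2 * E i p) (fun i _ => ha0 i) fun i _ => by
            have h1 : (1 : ℝ) ≤ M i := by exact_mod_cast hM i
            have h0 : 0 ≤ E i p := (sq_nonneg _).trans (hv i)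
            exact (hv i).trans (le_mul_of_one_le_left h0 (by nlinarith))
        have bdy := sq_sum_le_weighted T (fun i _ => hb0 i) fun i _ => hdy' i
        simp only [ex, ey, neg_sq]
        linarith
    _ = 2 * (∑ i ∈ T, a i) * (∫ p in Omega2, ∑ i ∈ T, 4 * (M i : ℝ) ^ 2 * E i p / a i) +
        (∑ i ∈ T, b i) * ∫ p in Omega2, ∑ i ∈ T, 4 * (L i : ℝ) ^ 2 * E i p / b i := by
        rw [integral_add (hIx.const_mul _) (hIy.const_mul _), integral_const_mul,
          integral_const_mul]
    _ ≤ 2 * (∑ i ∈ T, a i) * ((∑ i ∈ T, a i) * (Q / 4)) +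
        (∑ i ∈ T, b i) * ((∑ i ∈ T, b i) * (Q / 4)) := by gcongr
    _ ≤ 2 * S * (S * (Q / 4)) + S * (S * (Q / 4)) := by gcongr
    _ ≤ S ^ 2 * Q := by nlinarith [mul_nonneg (sq_nonneg S) hQ0]

lemma sum_two_pow_le (n : ℕ) : ∑ i ∈ range n, (2 : ℝ) ^ i ≤ 2 ^ n := by
  rw [geom_sum_eq (by norm_num)]
  norm_num

lemma sum_four_pow_mul_two_pow_le (k : ℕ) :
    ∑ i ∈ range k, ∑ j ∈ range (k - i), (4 : ℝ) ^ i * 2 ^ j ≤ 4 ^ k := by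
  calc _ ≤ ∑ i ∈ range k, (2 : ℝ) ^ k * 2 ^ i := by
        refine Finset.sum_le_sum fun i hi => ?_
        rw [← Finset.mul_sum]
        refine (mul_le_mul_of_nonneg_left (sum_two_pow_le _) (by positivity)).trans_eq ?_
        have hik : k = (k - i) + i := by have := mem_range.1 hi; omega
        have h4 : (4 : ℝ) ^ i = 2 ^ i * 2 ^ i := by rw [← mul_pow]; norm_num
        nth_rw 2 [hik]
        rw [h4, pow_add]
        ring
    _ ≤ 2 ^ k * 2 ^ k := by
        rw [← Finset.mul_sum]
        exact mul_le_mul_of_nonneg_left (sum_two_pow_le k) (by positivity)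
    _ = 4 ^ k := by rw [← mul_pow]; norm_num

lemma sum_two_pow_mul_four_pow_le (k : ℕ) :
    ∑ i ∈ range k, ∑ j ∈ range (k - i), (2 : ℝ) ^ i * 4 ^ j ≤ 4 ^ k := by
  refine le_trans (le_of_eq ?_) (sum_four_pow_mul_two_pow_le k)
  rw [Finset.sum_comm' (t' := range k) (s' := fun j => range (k - j))
    (fun i j => by simp only [mem_range]; omega)]
  exact Finset.sum_congr rfl fun i _ => Finset.sum_congr rfl fun j _ => mul_comm _ _

lemma one_div_two_pow_sub {m i : ℕ} (h : i < m) :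
    1 / (2 : ℝ) ^ (m - i - 1) = 2 * 2 ^ i / 2 ^ m := by
  obtain ⟨l, rfl⟩ := Nat.exists_eq_add_of_lt h
  rw [show i + l + 1 - i - 1 = l by omega]
  field_simp
  ring

/-- Energy-norm bound between the multiscale interpolant and the full bilinear interpolant:
`|||I^{(k)}_{N,N}u − I_{N,N}u||| ≤ C·4^{k+1}·N⁻³·‖∂⁴u/∂x²∂y²‖_{0,Ω}` for `N = 2^m`,
`1 ≤ k ≤ m`. -/
theorem multiscale_vs_full_interpolant_energy_bound :
    ∃ C : ℝ, 0 < C ∧ ∀ (m k : ℕ), 1 ≤ m → 1 ≤ k → k ≤ m →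
      ∀ u : ℝ × ℝ → ℝ, C4Near u → VanishOnBoundary u →
        energyNorm (fun p => msInterp (2 ^ m) k u p - interp (2 ^ m) (2 ^ m) u p) ≤
          C * 4 ^ (k + 1) * (((2 : ℝ) ^ m) ^ 3)⁻¹ * L2norm (uxxyy u) := by
  refine ⟨2, by norm_num, fun m k _ _ hk u hu _ => ?_⟩
  simp only [msInterp_sub_interp hk, Finset.sum_sigma']
  have hfour (n : ℕ) : (4 : ℝ) ^ n = (2 ^ n) ^ 2 := by
    rw [← pow_mul, mul_comm, pow_mul]; norm_num
  have hscale : (2 : ℝ) * 4 ^ (k + 1) * ((2 ^ m) ^ 3)⁻¹ = 8 / (2 ^ m) ^ 3 * 4 ^ k := by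
    rw [pow_succ]; ring
  rw [hscale]
  refine energyNorm_sum_detail_le ((range k).sigma fun i => range (k - i))
    (M := fun q => 2 ^ (m - q.1 - 1)) (L := fun q => 2 ^ (m - q.2 - 1))
    (fun _ => by positivity) (fun _ => by positivity) hu ?_ ?_
  · refine le_trans (le_of_eq ?_)
      (mul_le_mul_of_nonneg_left (sum_two_pow_mul_four_pow_le k) (by positivity))
    rw [Finset.sum_sigma, Finset.mul_sum]
    refine Finset.sum_congr rfl fun i hi => ?_
    rw [Finset.mul_sum]
    refine Finset.sum_congr rfl fun j hj => ?_
    rw [mem_range] at hi hj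
    push_cast
    rw [show ∀ x y : ℝ, 1 / (x * y ^ 2) = 1 / x * (1 / y) ^ 2 by intros; ring,
      one_div_two_pow_sub (by omega),
      one_div_two_pow_sub (by omega), hfour]
    field_simp
    norm_num
  · refine le_trans (le_of_eq ?_)
      (mul_le_mul_of_nonneg_left (sum_four_pow_mul_two_pow_le k) (by positivity))
    rw [Finset.sum_sigma, Finset.mul_sum]
    refine Finset.sum_congr rfl fun i hi => ?_
    rw [Finset.mul_sum]
    refine Finset.sum_congr rfl fun j hj => ?_
    rw [mem_range] at hi hj
    push_cast
    rw [show ∀ x y : ℝ, 1 / (x ^ 2 * y) = (1 / x) ^ 2 * (1 / y) by intros; ring,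
      one_div_two_pow_sub (by omega),
      one_div_two_pow_sub (by omega), hfour]
    field_simp
    norm_num
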